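/- Let Δ = {x ∈ ℝⁿ : x ≥ 0, 1ᵀx = 1} be the standard simplex, let μ ∈ ℝⁿ, R_target ∈ ℝ, and let F = Δ ∩ {x ∈ ℝⁿ : μᵀx ≥ R_target} be nonempty. Fix v ∈ ℝⁿ. (i) If μᵀΠ_Δ(v) ≥ R_target, then Π_F(v) = Π_Δ(v). (ii) If ν⋆ ≥ 0 satisfies μᵀΠ_Δ(v + ν⋆·μ) = R_target, then Π_F(v) = Π_Δ(v + ν⋆·μ). -/

import Mathlib

/-- The standard probability simplex `Δ = {x : x ≥ 0, 1ᵀx = 1}` in Euclidean space. -/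
def stdSimplex' (n : ℕ) : Set (EuclideanSpace ℝ (Fin n)) :=
  {x | (∀ i, 0 ≤ x i) ∧ (∑ i, x i) = 1}

theorem convex_stdSimplex' (n : ℕ) : Convex ℝ (stdSimplex' n) := by
  rintro x ⟨hx, hx1⟩ y ⟨hy, hy1⟩ a b ha hb hab
  refine ⟨fun i => ?_, ?_⟩
  · simpa using add_nonneg (mul_nonneg ha (hx i)) (mul_nonneg hb (hy i))
  · simp [Finset.sum_add_distrib, ← Finset.mul_sum, hx1, hy1, hab]

section InnerProductSpace

variable {E : Type*} [NormedAddCommGroup E] [InnerProductSpace ℝ E]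

/-- The variational inequality for a nearest point of a convex set. -/
theorem Convex.inner_sub_nonpos_of_forall_norm_le {K : Set E} (hK : Convex ℝ K) {w p q : E}
    (hp : p ∈ K) (hmin : ∀ z ∈ K, ‖w - p‖ ≤ ‖w - z‖) (hq : q ∈ K) :
    inner ℝ (w - p) (q - p) ≤ 0 := by
  have : Nonempty K := ⟨⟨p, hp⟩⟩
  refine (norm_eq_iInf_iff_real_inner_le_zero hK hp).1 (le_antisymm ?_ ?_) q hq
  · exact le_ciInf fun z => hmin z z.2
  · exact ciInf_le (f := fun z : K => ‖w - z‖)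
      ⟨0, Set.forall_mem_range.2 fun _ => norm_nonneg _⟩ ⟨p, hp⟩

theorem eq_of_inner_sub_nonpos_of_norm_sub_le {v p q : E} (hinner : inner ℝ (v - p) (q - p) ≤ 0)
    (hnorm : ‖v - q‖ ≤ ‖v - p‖) : q = p := by
  have hexpand := norm_sub_sq_real (v - p) (q - p)
  rw [sub_sub_sub_cancel_right] at hexpand
  have hsq : ‖v - q‖ ^ 2 ≤ ‖v - p‖ ^ 2 := by gcongr
  have hzero : ‖q - p‖ = 0 := pow_eq_zero_iff two_ne_zero |>.1
    (le_antisymm (by linarith) (sq_nonneg _))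
  exact sub_eq_zero.1 (norm_eq_zero.1 hzero)

end InnerProductSpace

/-- Let `F = Δ ∩ {x : μᵀx ≥ R_target}` be nonempty, and let `Π_Δ`,
`Π_F` be the Euclidean projections onto `Δ` and `F`. For any `v`:
(i) if `μᵀ Π_Δ(v) ≥ R_target` then `Π_F(v) = Π_Δ(v)`;
(ii) if `ν⋆ ≥ 0` satisfies `μᵀ Π_Δ(v + ν⋆ μ) = R_target` then `Π_F(v) = Π_Δ(v + ν⋆ μ)`. -/
theorem projection_onto_constrained_simplex {n : ℕ}
    (μ : EuclideanSpace ℝ (Fin n)) (Rtarget : ℝ)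
    (hFne : (stdSimplex' n ∩ {x | Rtarget ≤ ∑ i, μ i * x i}).Nonempty)
    (projD : EuclideanSpace ℝ (Fin n) → EuclideanSpace ℝ (Fin n))
    (hprojD : ∀ w, projD w ∈ stdSimplex' n ∧ ∀ z ∈ stdSimplex' n, ‖w - projD w‖ ≤ ‖w - z‖)
    (projF : EuclideanSpace ℝ (Fin n) → EuclideanSpace ℝ (Fin n))
    (hprojF : ∀ w, projF w ∈ stdSimplex' n ∩ {x | Rtarget ≤ ∑ i, μ i * x i} ∧
      ∀ z ∈ stdSimplex' n ∩ {x | Rtarget ≤ ∑ i, μ i * x i}, ‖w - projF w‖ ≤ ‖w - z‖)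
    (v : EuclideanSpace ℝ (Fin n)) :
    (Rtarget ≤ (∑ i, μ i * projD v i) → projF v = projD v) ∧
      ∀ νs : ℝ, 0 ≤ νs → (∑ i, μ i * projD (v + νs • μ) i) = Rtarget →
        projF v = projD (v + νs • μ) := by
  have hinner_eq (x : EuclideanSpace ℝ (Fin n)) : inner ℝ μ x = ∑ i, μ i * x i := by
    simp [PiLp.inner_apply, mul_comm]
  obtain ⟨⟨hqΔ, hqR⟩, hqmin⟩ := hprojF v
  constructor
  · intro hR
    obtain ⟨hp, hpmin⟩ := hprojD v
    exact eq_of_inner_sub_nonpos_of_norm_sub_le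
      ((convex_stdSimplex' n).inner_sub_nonpos_of_forall_norm_le hp hpmin hqΔ)
      (hqmin _ ⟨hp, hR⟩)
  · intro ν hν hR
    obtain ⟨hp, hpmin⟩ := hprojD (v + ν • μ)
    have hvar := (convex_stdSimplex' n).inner_sub_nonpos_of_forall_norm_le hp hpmin hqΔ
    rw [add_sub_right_comm, inner_add_left, real_inner_smul_left] at hvar
    have hμ : 0 ≤ inner ℝ μ (projF v - projD (v + ν • μ)) := by
      rw [inner_sub_right, hinner_eq, hinner_eq, hR]
      exact sub_nonneg.2 hqR
    exact eq_of_inner_sub_nonpos_of_norm_sub_le (by linarith [mul_nonneg hν hμ])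
      (hqmin _ ⟨hp, hR.ge⟩)
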